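/- arXiv:1104.1884 — 2 statements merged into one kernel-verified Lean document; each statement's English description precedes it below -/
import Mathlib

section
/- Let f : ℕ → (0,∞) be non-decreasing with f(n) → ∞. Then the following three statements are equivalent: (a) f ∈ H; (b) f ∈ G; (c) there exists K > 0 such that f(x+y) ≤ K·f(x)·f(y) for all positive integers x, y, and limsup_{n→∞} (1/n)·log f(n) = 0. -/
/-!
Sufficiency of the growth condition. Cutting a path at its first visit to an intermediate state and
using `f (x + y) ≤ K f x f y`, everything reduces to one hitting time: if the return time of `i` has
a finite `f`-moment, so has the hitting time of `j ≠ i` from `i`. That time is a geometric sum of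
excursions from `i` avoiding `j`, followed by a piece that reaches `j`. These excursions have total
mass `< 1`, but their `K f`-weighted mass may exceed `1`. The weight `K f` is therefore replaced by
its infimal convolution with `n ↦ b ^ n`, `b > 1`. This is still submultiplicative; it dominates a
multiple of `f` because `f` is subexponential; and dominated convergence as `b ↓ 1` brings the
weighted mass of the excursions below `1`, so that the geometric sum converges.

Necessity. A chain makes excursions of length `n + 2` from a hub with probability `s n`, each
visiting the special state `none` with probability `1 - q`. Let the law `s` have a finite
`f`-moment, so that membership in `𝒢` bounds the `f`-moment of the return time of `none`. For
`q = 1 / 2` this time is with positive probability the sum of two independent excursion lengths; if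
`f (x + y) ≤ K f x f y` failed for every `K`, some `s` would give it an infinite `f`-moment. For `q`
and `s 0` close to `1` its tail decays exponentially at an arbitrarily small rate, so `f` has to be
subexponential.
-/

open Filter
open scoped ENNReal

namespace MCPaper

variable {E : Type*}

open Classical in
/-- `hitAvoid P t a n x` is the probability that the chain with transition matrix `P`,
started at `x`, is at `t` at time `n` while avoiding both `t` and `a` at times `1,…,n-1`.
For `t = a` this is the distribution of the first hitting time of `t`. -/
noncomputable def hitAvoid (P : E → E → ℝ≥0∞) (t a : E) : ℕ → E → ℝ≥0∞
  | 0, _ => 0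
  | 1, x => P x t
  | n + 2, x => ∑' k : E, if k = t ∨ k = a then 0 else P x k * hitAvoid P t a (n + 1) k

/-- `firstHit P i j n = P_i(T_ij = n)`, the probability that the first hitting time of `j`
(first return time if `i = j`) starting from `i` equals `n`. -/
noncomputable def firstHit (P : E → E → ℝ≥0∞) (i j : E) (n : ℕ) : ℝ≥0∞ :=
  hitAvoid P j j n i

/-- `P` is a stochastic matrix. -/
def IsStochastic (P : E → E → ℝ≥0∞) : Prop := ∀ i, ∑' j : E, P i j = 1

/-- irreducibility: any state can be reached from any other state. -/
def IsIrreducible (P : E → E → ℝ≥0∞) : Prop := ∀ i j : E, ∃ n : ℕ, 0 < firstHit P i j n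

/-- recurrence: `P_i(T_ii < ∞) = 1` for every state `i`. -/
def IsRecurrent (P : E → E → ℝ≥0∞) : Prop := ∀ i : E, ∑' n : ℕ, firstHit P i i n = 1

/-- the generalized moment `E f(T_ij)` of the first hitting time of `j` from `i`. -/
noncomputable def momGen (f : ℕ → ℝ) (P : E → E → ℝ≥0∞) (i j : E) : ℝ≥0∞ :=
  ∑' n : ℕ, ENNReal.ofReal (f n) * firstHit P i j n

/-- the class `𝒢`: a finite generalized `f`-moment of the return time of one state implies
finiteness for the return times of all states, for every irreducible recurrent chain. -/
def MemG (f : ℕ → ℝ) : Prop :=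
  ∀ (S : Type) [Countable S] (P : S → S → ℝ≥0∞),
    IsStochastic P → IsIrreducible P → IsRecurrent P →
      ∀ i : S, momGen f P i i < ⊤ → ∀ j : S, momGen f P j j < ⊤

/-- the class `ℋ`: finiteness of `E f(T_ij)` and `E f(T_ji)` for a pair of states implies
finiteness of `E f(T_kl)` for all pairs, for every irreducible recurrent chain. -/
def MemH (f : ℕ → ℝ) : Prop :=
  ∀ (S : Type) [Countable S] (P : S → S → ℝ≥0∞),
    IsStochastic P → IsIrreducible P → IsRecurrent P →
      ∀ i j : S, momGen f P i j < ⊤ → momGen f P j i < ⊤ →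
        ∀ k l : S, momGen f P k l < ⊤

open Finset.HasAntidiagonal (antidiagonal)
open scoped NNReal Topology

variable {P : E → E → ℝ≥0∞} {i j t a x : E}

/-! ### First-passage decomposition -/

open Classical in
/-- One step of the chain `P` killed on `{t, a}`, acting on functions. -/
noncomputable def killedStep (P : E → E → ℝ≥0∞) (t a : E) (u : E → ℝ≥0∞) (x : E) : ℝ≥0∞ :=
  ∑' k, if k = t ∨ k = a then 0 else P x k * u k

theorem killedStep_comm (P : E → E → ℝ≥0∞) (t a : E) (u : E → ℝ≥0∞) (x : E) :
    killedStep P t a u x = killedStep P a t u x := by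
  classical exact tsum_congr fun k => if_congr or_comm rfl rfl

theorem killedStep_add (P : E → E → ℝ≥0∞) (t a : E) (u v : E → ℝ≥0∞) (x : E) :
    killedStep P t a (fun k => u k + v k) x = killedStep P t a u x + killedStep P t a v x := by
  rw [killedStep, killedStep, killedStep, ← ENNReal.tsum_add]
  exact tsum_congr fun k => by split_ifs <;> simp [mul_add]

theorem killedStep_mul_right (P : E → E → ℝ≥0∞) (t a : E) (u : E → ℝ≥0∞) (c : ℝ≥0∞) (x : E) :
    killedStep P t a (fun k => u k * c) x = killedStep P t a u x * c := by
  rw [killedStep, killedStep, ← ENNReal.tsum_mul_right]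
  exact tsum_congr fun k => by split_ifs <;> simp [mul_assoc]

theorem killedStep_tsum {ι : Type*} (P : E → E → ℝ≥0∞) (t a : E) (u : ι → E → ℝ≥0∞) (x : E) :
    killedStep P t a (fun k => ∑' n, u n k) x = ∑' n, killedStep P t a (u n) x := by
  simp only [killedStep]
  rw [ENNReal.tsum_comm]
  exact tsum_congr fun k => by split_ifs <;> simp [ENNReal.tsum_mul_left]

theorem killedStep_mono (P : E → E → ℝ≥0∞) {u v : E → ℝ≥0∞} (huv : ∀ k, u k ≤ v k) (t a x : E) :
    killedStep P t a u x ≤ killedStep P t a v x :=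
  ENNReal.tsum_le_tsum fun k => by split_ifs; exacts [le_rfl, mul_le_mul_right (huv k) _]

theorem killedStep_le_killedStep_self (P : E → E → ℝ≥0∞) (t a : E) (u : E → ℝ≥0∞) (x : E) :
    killedStep P t a u x ≤ killedStep P t t u x :=
  ENNReal.tsum_le_tsum fun k => by by_cases k = t <;> by_cases k = a <;> simp_all

theorem mul_le_killedStep (P : E → E → ℝ≥0∞) {k : E} (hk : k ≠ t) (u : E → ℝ≥0∞) (x : E) :
    P x k * u k ≤ killedStep P t t u x := by
  classical
  simpa [killedStep, hk] using
    ENNReal.le_tsum (f := fun k => if k = t ∨ k = t then 0 else P x k * u k) k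

theorem tsum_eq_add_killedStep (P : E → E → ℝ≥0∞) (t : E) (u : E → ℝ≥0∞) (x : E) :
    ∑' k, P x k * u k = P x t * u t + killedStep P t t u x := by
  classical
  rw [ENNReal.tsum_eq_add_tsum_ite t]
  simp only [killedStep, or_self]

theorem killedStep_self_eq_add (P : E → E → ℝ≥0∞) (hij : i ≠ j) (u : E → ℝ≥0∞) (x : E) :
    killedStep P j j u x = P x i * u i + killedStep P j i u x := by
  classical
  rw [killedStep, ENNReal.tsum_eq_add_tsum_ite i, if_neg (by simp [hij]), killedStep]
  exact congrArg _ (tsum_congr fun k => by by_cases k = i <;> by_cases k = j <;> simp_all)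

theorem hitAvoid_zero (P : E → E → ℝ≥0∞) (t a x : E) : hitAvoid P t a 0 x = 0 := by
  rw [hitAvoid]

theorem hitAvoid_one (P : E → E → ℝ≥0∞) (t a x : E) : hitAvoid P t a 1 x = P x t := by
  rw [hitAvoid]

theorem hitAvoid_add_two (P : E → E → ℝ≥0∞) (t a : E) (n : ℕ) (x : E) :
    hitAvoid P t a (n + 2) x = killedStep P t a (hitAvoid P t a (n + 1)) x := by
  rw [hitAvoid, killedStep]

theorem killedStep_hitAvoid_zero (P : E → E → ℝ≥0∞) (t a b c x : E) :
    killedStep P t a (hitAvoid P b c 0) x = 0 := by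
  simp [killedStep, hitAvoid_zero]

theorem hitAvoid_succ (P : E → E → ℝ≥0∞) (t a : E) (n : ℕ) (x : E) :
    hitAvoid P t a (n + 1) x =
      (if n = 0 then P x t else 0) + killedStep P t a (hitAvoid P t a n) x := by
  cases n with
  | zero => simp [hitAvoid_one, killedStep_hitAvoid_zero]
  | succ n => simp [hitAvoid_add_two]

theorem hitAvoid_le_hitAvoid_self (P : E → E → ℝ≥0∞) (t a : E) (n : ℕ) (x : E) :
    hitAvoid P t a n x ≤ hitAvoid P t t n x := by
  induction n generalizing x with
  | zero => simp only [hitAvoid_zero, le_refl]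
  | succ n ih =>
    rw [hitAvoid_succ, hitAvoid_succ]
    gcongr
    exact (killedStep_mono P ih t a x).trans (killedStep_le_killedStep_self P t a _ x)

theorem mul_hitAvoid_le_hitAvoid_succ (P : E → E → ℝ≥0∞) {k : E} (hk : k ≠ t) (n : ℕ) (x : E) :
    P x k * hitAvoid P t t n k ≤ hitAvoid P t t (n + 1) x := by
  rw [hitAvoid_succ]
  exact (mul_le_killedStep P hk _ x).trans le_add_self

theorem sum_antidiagonal_succ_hitAvoid_mul (P : E → E → ℝ≥0∞) (t a : E) (u : ℕ → ℝ≥0∞) (n : ℕ)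
    (x : E) :
    ∑ p ∈ antidiagonal (n + 1), hitAvoid P t a p.1 x * u p.2 =
      P x t * u n + killedStep P t a
        (fun k => ∑ p ∈ antidiagonal n, hitAvoid P t a p.1 k * u p.2) x := by
  have hsum : killedStep P t a (fun k => ∑ p ∈ antidiagonal n, hitAvoid P t a p.1 k * u p.2)
      x = ∑ p ∈ antidiagonal n, killedStep P t a (hitAvoid P t a p.1) x * u p.2 := by
    simp only [← killedStep_mul_right, ← Finset.tsum_subtype, killedStep_tsum]
  simp only [Finset.Nat.antidiagonal_succ, Finset.sum_cons, Finset.sum_map,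
    Function.Embedding.prodMap, Function.Embedding.coeFn_mk, Prod.map, Nat.succ_eq_add_one,
    Function.Embedding.refl_apply, hitAvoid_zero, zero_mul, zero_add, hitAvoid_succ, add_mul,
    Finset.sum_add_distrib, hsum]
  congr 1
  rw [Finset.sum_eq_single (0, n)]
  · simp
  · rintro ⟨m, l⟩ hml hne
    rcases Nat.eq_zero_or_pos m with rfl | hm
    · simp_all
    · simp [hm.ne']
  · simp

theorem hitAvoid_self_eq_add (P : E → E → ℝ≥0∞) (hij : i ≠ j) (n : ℕ) (x : E) :
    hitAvoid P j j n x = hitAvoid P j i n x +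
      ∑ p ∈ antidiagonal n, hitAvoid P i j p.1 x * hitAvoid P j j p.2 i := by
  induction n generalizing x with
  | zero => simp [hitAvoid_zero]
  | succ n ih =>
    have hstep : killedStep P j j (hitAvoid P j j n) x =
        P x i * hitAvoid P j j n i + killedStep P j i (hitAvoid P j i n) x +
          killedStep P i j (fun k => ∑ p ∈ antidiagonal n,
            hitAvoid P i j p.1 k * hitAvoid P j j p.2 i) x := by
      rw [killedStep_self_eq_add P hij, funext ih, killedStep_add, killedStep_comm P i j,
        ← add_assoc]
    rw [hitAvoid_succ, hitAvoid_succ, hstep,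
      sum_antidiagonal_succ_hitAvoid_mul P i j fun m => hitAvoid P j j m i]
    ring

/-! ### Moments of passage times -/

/-- The `w`-moment of the passage time to `t` from `x`, on the event that `a` is avoided on the
way. -/
noncomputable def hitMoment (w : ℕ → ℝ≥0∞) (P : E → E → ℝ≥0∞) (t a x : E) : ℝ≥0∞ :=
  ∑' n, w n * hitAvoid P t a n x

/-- The probability that the chain started at `x` ever hits `t`, avoiding `a` on the way. -/
noncomputable abbrev hitProb (P : E → E → ℝ≥0∞) (t a x : E) : ℝ≥0∞ := hitMoment 1 P t a x

theorem momGen_eq_hitMoment (f : ℕ → ℝ) (P : E → E → ℝ≥0∞) (i j : E) :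
    momGen f P i j = hitMoment (fun n => ENNReal.ofReal (f n)) P j j i := rfl

theorem isRecurrent_iff_hitProb : IsRecurrent P ↔ ∀ i, hitProb P i i i = 1 := by
  simp only [IsRecurrent, firstHit, hitMoment, Pi.one_apply, one_mul]

section Moments

variable {w w₁ w₂ : ℕ → ℝ≥0∞}

theorem hitMoment_congr (P : E → E → ℝ≥0∞) (h : ∀ n, w₁ (n + 1) = w₂ (n + 1)) (t a x : E) :
    hitMoment w₁ P t a x = hitMoment w₂ P t a x :=
  tsum_congr fun n => by cases n <;> simp [hitAvoid_zero, h]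

theorem hitMoment_mono (P : E → E → ℝ≥0∞) (h : ∀ n, w₁ n ≤ w₂ n) (t a x : E) :
    hitMoment w₁ P t a x ≤ hitMoment w₂ P t a x :=
  ENNReal.tsum_le_tsum fun n => mul_le_mul_left (h n) _

theorem hitMoment_const_mul (c : ℝ≥0∞) (w : ℕ → ℝ≥0∞) (P : E → E → ℝ≥0∞) (t a x : E) :
    hitMoment (fun n => c * w n) P t a x = c * hitMoment w P t a x := by
  simp only [hitMoment, mul_assoc, ENNReal.tsum_mul_left]

theorem hitMoment_le_hitMoment_self (w : ℕ → ℝ≥0∞) (P : E → E → ℝ≥0∞) (t a x : E) :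
    hitMoment w P t a x ≤ hitMoment w P t t x :=
  ENNReal.tsum_le_tsum fun n => mul_le_mul_right (hitAvoid_le_hitAvoid_self P t a n x) _

theorem hitMoment_le_of_truncation_le {c : ℝ≥0∞}
    (h : ∀ N, hitMoment ((Set.Iio N).indicator w) P t a x ≤ c) : hitMoment w P t a x ≤ c := by
  refine ENNReal.tsum_le_of_sum_range_le fun N => le_trans (le_of_eq ?_)
    ((ENNReal.sum_le_tsum (Finset.range N)).trans (h N))
  exact Finset.sum_congr rfl fun n hn => by
    rw [Set.indicator_of_mem (Set.mem_Iio.2 (Finset.mem_range.1 hn))]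

theorem hitMoment_eq_add_killedStep (w : ℕ → ℝ≥0∞) (P : E → E → ℝ≥0∞) (t a x : E) :
    hitMoment w P t a x =
      w 1 * P x t + killedStep P t a (hitMoment (fun n => w (n + 1)) P t a) x := by
  have hkill : killedStep P t a (hitMoment (fun n => w (n + 1)) P t a) x =
      ∑' n, w (n + 1) * killedStep P t a (hitAvoid P t a n) x := by
    simp only [mul_comm (w _), ← killedStep_mul_right, ← killedStep_tsum]
    exact congrArg (killedStep P t a · x) (funext fun k => tsum_congr fun n => mul_comm _ _)
  rw [hitMoment, tsum_eq_zero_add' ENNReal.summable, hitAvoid_zero, mul_zero, zero_add, hkill]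
  simp only [hitAvoid_succ, mul_add, ENNReal.tsum_add, mul_ite, mul_zero]
  rw [tsum_ite_eq]

theorem tsum_sum_antidiagonal (F : ℕ × ℕ → ℝ≥0∞) :
    ∑' n, ∑ p ∈ antidiagonal n, F p = ∑' p, F p := by
  rw [← Finset.HasAntidiagonal.sigmaAntidiagonalEquivProd.tsum_eq F, ENNReal.tsum_sigma']
  exact tsum_congr fun n => (Finset.tsum_subtype (antidiagonal n) F).symm

theorem hitMoment_self_eq_add (w : ℕ → ℝ≥0∞) (P : E → E → ℝ≥0∞) (hij : i ≠ j) (x : E) :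
    hitMoment w P j j x = hitMoment w P j i x +
      ∑' p : ℕ × ℕ, w (p.1 + p.2) * (hitAvoid P i j p.1 x * hitAvoid P j j p.2 i) := by
  rw [← tsum_sum_antidiagonal, hitMoment, hitMoment, ← ENNReal.tsum_add]
  refine tsum_congr fun n => ?_
  rw [hitAvoid_self_eq_add P hij, mul_add, Finset.mul_sum]
  congr 1
  refine Finset.sum_congr rfl fun p hp => ?_
  rw [Finset.HasAntidiagonal.mem_antidiagonal.1 hp]

theorem hitMoment_mul_hitMoment (w₁ w₂ : ℕ → ℝ≥0∞) (P : E → E → ℝ≥0∞) (t a x t' a' x' : E) :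
    hitMoment w₁ P t a x * hitMoment w₂ P t' a' x' =
      ∑' p : ℕ × ℕ, w₁ p.1 * w₂ p.2 * (hitAvoid P t a p.1 x * hitAvoid P t' a' p.2 x') := by
  rw [ENNReal.tsum_prod', hitMoment, ← ENNReal.tsum_mul_right]
  refine tsum_congr fun m => ?_
  rw [hitMoment, ← ENNReal.tsum_mul_left]
  exact tsum_congr fun n => by ring

theorem hitMoment_self_le_add_mul (P : E → E → ℝ≥0∞) (hij : i ≠ j)
    (hw : ∀ m n, w (m + n) ≤ w₁ m * w₂ n) (x : E) :
    hitMoment w P j j x ≤ hitMoment w P j i x + hitMoment w₁ P i j x * hitMoment w₂ P j j i := by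
  rw [hitMoment_self_eq_add w P hij, hitMoment_mul_hitMoment]
  exact add_le_add_right (ENNReal.tsum_le_tsum fun p => mul_le_mul_left (hw _ _) _) _

theorem add_mul_le_hitMoment_self (P : E → E → ℝ≥0∞) (hij : i ≠ j)
    (hw : ∀ m n, w₁ m * w₂ n ≤ w (m + n)) (x : E) :
    hitMoment w P j i x + hitMoment w₁ P i j x * hitMoment w₂ P j j i ≤ hitMoment w P j j x := by
  rw [hitMoment_self_eq_add w P hij, hitMoment_mul_hitMoment]
  exact add_le_add_right (ENNReal.tsum_le_tsum fun p => mul_le_mul_left (hw _ _) _) _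

theorem hitMoment_mul_hitProb_le (P : E → E → ℝ≥0∞) (hij : i ≠ j) (hw : Monotone w) (x : E) :
    hitMoment w P i j x * hitProb P j j i ≤ hitMoment w P j j x :=
  le_add_self.trans (add_mul_le_hitMoment_self P hij (fun m n => by
    simpa using hw (Nat.le_add_right m n)) x)

theorem hitProb_mul_hitMoment_le (P : E → E → ℝ≥0∞) (hij : i ≠ j) (hw : Monotone w) (x : E) :
    hitProb P i j x * hitMoment w P j j i ≤ hitMoment w P j j x :=
  le_add_self.trans (add_mul_le_hitMoment_self P hij (fun m n => by
    simpa using hw (Nat.le_add_left n m)) x)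

end Moments

/-! ### Recurrence is a class property -/

theorem hitProb_eq_add_killedStep (P : E → E → ℝ≥0∞) (t a x : E) :
    hitProb P t a x = P x t + killedStep P t a (hitProb P t a) x :=
  (hitMoment_eq_add_killedStep 1 P t a x).trans (by rw [Pi.one_apply, one_mul]; rfl)

theorem hitProb_self_eq_add (P : E → E → ℝ≥0∞) (hij : i ≠ j) (x : E) :
    hitProb P j j x = hitProb P j i x + hitProb P i j x * hitProb P j j i :=
  le_antisymm (hitMoment_self_le_add_mul P hij (by simp) x)
    (add_mul_le_hitMoment_self P hij (by simp) x)

theorem hitProb_self_le_one (hP : IsStochastic P) (t x : E) : hitProb P t t x ≤ 1 := by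
  refine hitMoment_le_of_truncation_le fun N => ?_
  induction N generalizing x with
  | zero => simp [hitMoment]
  | succ N ih =>
    have hshift : (fun n => (Set.Iio (N + 1)).indicator (1 : ℕ → ℝ≥0∞) (n + 1)) =
        (Set.Iio N).indicator 1 := by
      ext n
      simp [Set.indicator]
    calc hitMoment ((Set.Iio (N + 1)).indicator 1) P t t x
        ≤ 1 * P x t + killedStep P t t (fun _ => 1) x := by
          rw [hitMoment_eq_add_killedStep, hshift]
          gcongr
          · exact Set.indicator_le_self' (by simp) 1
          · exact killedStep_mono P ih t t x
      _ = ∑' k, P x k * 1 := by rw [tsum_eq_add_killedStep P t, mul_comm]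
      _ = 1 := by simp [hP x]

theorem hitProb_ne_top (hP : IsStochastic P) (t a x : E) : hitProb P t a x ≠ ⊤ :=
  ne_top_of_le_ne_top ENNReal.one_ne_top
    ((hitMoment_le_hitMoment_self 1 P t a x).trans (hitProb_self_le_one hP t x))

theorem eq_one_of_tsum_mul_eq_one {ι : Type*} {p g : ι → ℝ≥0∞} (hp : ∑' k, p k = 1)
    (hg : ∀ k, g k ≤ 1) (hpg : ∑' k, p k * g k = 1) {k : ι} (hk : p k ≠ 0) : g k = 1 := by
  by_contra hne
  have hk_top : p k ≠ ⊤ := ne_top_of_le_ne_top (by simp [hp]) (ENNReal.le_tsum k)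
  have hlt : p k * g k < p k :=
    (ENNReal.mul_lt_mul_right hk hk_top ((hg k).lt_of_ne hne)).trans_eq (mul_one _)
  exact (ENNReal.tsum_lt_tsum (by simp [hpg]) (fun l => mul_le_of_le_one_right' (hg l)) hlt).ne
    (hpg.trans hp.symm)

theorem hitProb_self_eq_one_of_step {k : E} (hP : IsStochastic P) (ht : hitProb P t t t = 1)
    (hx : hitProb P t t x = 1) (hk : P x k ≠ 0) : hitProb P t t k = 1 := by
  refine eq_one_of_tsum_mul_eq_one (hP x) (hitProb_self_le_one hP t) ?_ hk
  rw [tsum_eq_add_killedStep P t, ht, mul_one, ← hitProb_eq_add_killedStep, hx]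

theorem hitProb_self_eq_one_of_hitAvoid_ne_zero {n : ℕ} {y : E} (hP : IsStochastic P)
    (ht : hitProb P t t t = 1) (hx : hitProb P t t x = 1) (hn : hitAvoid P y y n x ≠ 0) :
    hitProb P t t y = 1 := by
  induction n generalizing x with
  | zero => exact absurd (hitAvoid_zero P y y x) hn
  | succ n ih =>
    by_cases hxy : P x y = 0
    · obtain ⟨k, hk⟩ : ∃ k, P x k * hitAvoid P y y n k ≠ 0 := by
        by_contra! hzero
        simp [hitAvoid_succ, hxy, killedStep, hzero] at hn
      exact ih (hitProb_self_eq_one_of_step hP ht hx (left_ne_zero_of_mul hk))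
        (right_ne_zero_of_mul hk)
    · exact hitProb_self_eq_one_of_step hP ht hx hxy

theorem hitProb_self_eq_one (hP : IsStochastic P) (hI : IsIrreducible P)
    (ht : hitProb P t t t = 1) (x : E) : hitProb P t t x = 1 :=
  (hI t x).elim fun _ hn => hitProb_self_eq_one_of_hitAvoid_ne_zero hP ht ht hn.ne'

theorem exists_hitAvoid_ne_zero {n : ℕ} (hij : i ≠ j) (hn : hitAvoid P j j n i ≠ 0) :
    ∃ m, hitAvoid P j i m i ≠ 0 := by
  induction n using Nat.strong_induction_on with
  | _ n ih =>
    by_contra! hzero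
    rw [hitAvoid_self_eq_add P hij, hzero, zero_add] at hn
    obtain ⟨p, hp, hne⟩ := Finset.exists_ne_zero_of_sum_ne_zero hn
    have hp_ne : p.1 ≠ 0 := fun h0 => hne (by rw [h0, hitAvoid_zero, zero_mul])
    have hp_sum := Finset.HasAntidiagonal.mem_antidiagonal.1 hp
    obtain ⟨m, hm⟩ := ih p.2 (by lia) (right_ne_zero_of_mul hne)
    exact hm (hzero m)

theorem hitProb_ne_zero {n : ℕ} (h : hitAvoid P t a n x ≠ 0) : hitProb P t a x ≠ 0 := by
  simp only [hitMoment, Pi.one_apply, one_mul, ne_eq, ENNReal.tsum_eq_zero, not_forall]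
  exact ⟨n, h⟩

theorem hitProb_avoid_start_ne_zero (hI : IsIrreducible P) (hij : i ≠ j) :
    hitProb P j i i ≠ 0 := by
  obtain ⟨n, hn⟩ := hI i j
  obtain ⟨m, hm⟩ := exists_hitAvoid_ne_zero hij hn.ne'
  exact hitProb_ne_zero hm

theorem hitProb_avoid_add_eq_one (hP : IsStochastic P) (hI : IsIrreducible P)
    (hi : hitProb P i i i = 1) (hij : i ≠ j) (x : E) :
    hitProb P i j x + hitProb P j i x = 1 := by
  have h := hitProb_self_eq_add P hij.symm x
  rwa [hitProb_self_eq_one hP hI hi, hitProb_self_eq_one hP hI hi, mul_one, eq_comm] at h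

theorem hitProb_return_avoid_lt_one (hP : IsStochastic P) (hI : IsIrreducible P)
    (hi : hitProb P i i i = 1) (hij : i ≠ j) : hitProb P i j i < 1 := by
  rw [← hitProb_avoid_add_eq_one hP hI hi hij i]
  exact ENNReal.lt_add_right (hitProb_ne_top hP i j i) (hitProb_avoid_start_ne_zero hI hij)

theorem isRecurrent_of_hitProb_eq_one (hP : IsStochastic P) (hI : IsIrreducible P)
    (hi : hitProb P i i i = 1) : IsRecurrent P := by
  refine isRecurrent_iff_hitProb.2 fun j => ?_
  obtain rfl | hij := eq_or_ne i j
  · exact hi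
  have hsplit := hitProb_avoid_add_eq_one hP hI hi hij
  have hfin := hitProb_ne_top hP
  have hcancel : hitProb P j i i * hitProb P j j i = hitProb P j i i * 1 := by
    refine (ENNReal.add_right_inj (ENNReal.mul_ne_top (hfin i j i) (hfin j j i))).1 ?_
    rw [← add_mul, hsplit, one_mul, mul_one, add_comm]
    exact hitProb_self_eq_add P hij i
  have hhit : hitProb P j j i = 1 :=
    (ENNReal.mul_right_inj (hitProb_avoid_start_ne_zero hI hij) (hfin j i i)).1 hcancel
  rw [hitProb_self_eq_add P hij, hhit, mul_one, add_comm, hsplit]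

/-! ### Renewal and tempering -/

theorem le_div_one_sub_of_le_add_mul {x a b : ℝ≥0∞} (hx : x ≠ ⊤) (ha : a < 1)
    (h : x ≤ b + a * x) : x ≤ b / (1 - a) := by
  rw [ENNReal.le_div_iff_mul_le (Or.inl (tsub_pos_of_lt ha).ne')
    (Or.inl (ne_top_of_le_ne_top ENNReal.one_ne_top tsub_le_self)), mul_comm,
    ENNReal.sub_mul fun _ _ => hx, one_mul]
  exact tsub_le_iff_right.2 h

theorem hitMoment_truncation_ne_top {w : ℕ → ℝ≥0∞} (hP : IsStochastic P) (hw : ∀ n, w n ≠ ⊤)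
    (N : ℕ) (t a x : E) : hitMoment ((Set.Iio N).indicator w) P t a x ≠ ⊤ := by
  have hbound : ∀ n, (Set.Iio N).indicator w n ≤ (∑ m ∈ Finset.range N, w m) * (1 : ℕ → ℝ≥0∞) n :=
    fun n => Set.indicator_apply_le' (fun hn => by
      simpa using Finset.single_le_sum_of_canonicallyOrdered (f := w) (Finset.mem_range.2 hn))
      fun _ => zero_le
  refine ne_top_of_le_ne_top ?_ (hitMoment_mono P hbound t a x)
  rw [hitMoment_const_mul]
  exact ENNReal.mul_ne_top (ENNReal.sum_ne_top.2 fun m _ => hw m) (hitProb_ne_top hP t a x)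

/-- The passage from `i` to `j` consists of a geometric number of excursions from `i` avoiding `j`,
followed by a piece that reaches `j` without returning to `i`. -/
theorem hitMoment_self_le_div {w : ℕ → ℝ≥0∞} (hP : IsStochastic P) (hij : i ≠ j)
    (hw_top : ∀ n, w n ≠ ⊤) (hw : ∀ m n, w (m + n) ≤ w m * w n) (hlt : hitMoment w P i j i < 1) :
    hitMoment w P j j i ≤ hitMoment w P j i i / (1 - hitMoment w P i j i) := by
  refine hitMoment_le_of_truncation_le fun N =>
    le_div_one_sub_of_le_add_mul (hitMoment_truncation_ne_top hP hw_top N j j i) hlt ?_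
  have hsubmul (m n : ℕ) :
      (Set.Iio N).indicator w (m + n) ≤ w m * (Set.Iio N).indicator w n :=
    Set.indicator_apply_le' (fun hmn => by
      rw [Set.indicator_of_mem (Set.mem_Iio.2 ((Nat.le_add_left n m).trans_lt hmn))]
      exact hw m n) fun _ => zero_le
  exact (hitMoment_self_le_add_mul P hij hsubmul i).trans
    (add_le_add_left (hitMoment_mono P (Set.indicator_le_self' fun _ _ => zero_le) j i i) _)

/-- The infimal convolution of two weights; it tempers the growth of `v` by that of `u`. -/
noncomputable def infConv (u v : ℕ → ℝ≥0∞) (n : ℕ) : ℝ≥0∞ :=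
  (antidiagonal n).inf fun p => u p.1 * v p.2

section InfConv

variable {u v w : ℕ → ℝ≥0∞}

theorem infConv_add_le (u v : ℕ → ℝ≥0∞) (m n : ℕ) : infConv u v (m + n) ≤ u m * v n :=
  Finset.inf_le (f := fun p : ℕ × ℕ => u p.1 * v p.2)
    (Finset.HasAntidiagonal.mem_antidiagonal.2 (Eq.refl ((m, n).1 + (m, n).2)))

theorem exists_infConv_eq (u v : ℕ → ℝ≥0∞) (n : ℕ) :
    ∃ m l, m + l = n ∧ infConv u v n = u m * v l := by
  obtain ⟨p, hp, heq⟩ := Finset.exists_mem_eq_inf (antidiagonal n)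
    ⟨(0, n), Finset.HasAntidiagonal.mem_antidiagonal.2 (zero_add n)⟩ fun p => u p.1 * v p.2
  exact ⟨p.1, p.2, Finset.HasAntidiagonal.mem_antidiagonal.1 hp, heq⟩

theorem infConv_le_left (hv : v 0 = 1) (n : ℕ) : infConv u v n ≤ u n := by
  simpa [hv] using infConv_add_le u v n 0

theorem infConv_le_right (hu : u 0 = 1) (n : ℕ) : infConv u v n ≤ v n := by
  simpa [hu] using infConv_add_le u v 0 n

theorem infConv_submultiplicative (hu : ∀ m n, u (m + n) ≤ u m * u n)
    (hv : ∀ m n, v (m + n) ≤ v m * v n) (m n : ℕ) :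
    infConv u v (m + n) ≤ infConv u v m * infConv u v n := by
  obtain ⟨m₁, m₂, rfl, hm⟩ := exists_infConv_eq u v m
  obtain ⟨n₁, n₂, rfl, hn⟩ := exists_infConv_eq u v n
  calc infConv u v (m₁ + m₂ + (n₁ + n₂))
      ≤ u (m₁ + n₁) * v (m₂ + n₂) := by
        rw [add_add_add_comm]
        exact infConv_add_le u v _ _
    _ ≤ u m₁ * u n₁ * (v m₂ * v n₂) := mul_le_mul' (hu _ _) (hv _ _)
    _ = infConv u v (m₁ + m₂) * infConv u v (n₁ + n₂) := by rw [hm, hn, mul_mul_mul_comm]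

theorem le_mul_infConv {C : ℝ≥0∞} (h : ∀ m n, w (m + n) ≤ C * (u m * v n)) (n : ℕ) :
    w n ≤ C * infConv u v n := by
  obtain ⟨m, l, rfl, hn⟩ := exists_infConv_eq u v n
  exact hn ▸ h m l

end InfConv

theorem exists_one_lt_tsum_min_pow_mul_lt_one {a w : ℕ → ℝ≥0∞} (ha : ∑' n, a n < 1)
    (hw : ∑' n, w n * a n ≠ ⊤) :
    ∃ b : ℝ≥0, 1 < b ∧ ∑' n, min ((b : ℝ≥0∞) ^ n) (w n) * a n < 1 := by
  have ha_top (n : ℕ) : a n ≠ ⊤ := ((ENNReal.le_tsum n).trans_lt ha).ne_top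
  have hlim : Tendsto (fun b : ℝ≥0 => ∑' n, min ((b : ℝ≥0∞) ^ n) (w n) * a n) (𝓝[>] 1)
      (𝓝 (∑' n, min 1 (w n) * a n)) := by
    simp only [← MeasureTheory.lintegral_count]
    refine MeasureTheory.tendsto_lintegral_filter_of_dominated_convergence (fun n => w n * a n)
      (.of_forall fun b => measurable_from_top)
      (.of_forall fun b => .of_forall fun n => mul_le_mul_left (min_le_right _ _) _)
      (by rwa [MeasureTheory.lintegral_count]) (.of_forall fun n => ?_)
    have hcont : Continuous fun b : ℝ≥0 => min ((b : ℝ≥0∞) ^ n) (w n) * a n :=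
      ENNReal.continuous_mul_const (ha_top n) |>.comp <|
        ((ENNReal.continuous_pow n).comp ENNReal.continuous_coe).min continuous_const
    simpa using (hcont.tendsto 1).mono_left nhdsWithin_le_nhds
  have hlim_lt : ∑' n, min 1 (w n) * a n < 1 :=
    (ENNReal.tsum_le_tsum fun n => mul_le_of_le_one_left' (min_le_left _ _)).trans_lt ha
  exact ((eventually_mem_nhdsWithin (α := ℝ≥0)).and (hlim.eventually_lt_const hlim_lt)).exists

/-! ### Solidarity for moderate weights -/

/-- `w` grows more slowly than every exponential `b ^ n` with `b > 1`. -/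
def IsSubexponential (w : ℕ → ℝ≥0∞) : Prop :=
  ∀ b : ℝ≥0, 1 < b → ∃ C : ℝ≥0, ∀ n, w n ≤ C * (b : ℝ≥0∞) ^ n

/-- Moderate weights: the normalised weights for which finiteness of moments of passage times is
a class property. -/
structure IsModerate (w : ℕ → ℝ≥0∞) : Prop where
  monotone : Monotone w
  map_zero : w 0 = 1
  map_add_le : ∀ m n, w (m + n) ≤ w m * w n
  subexponential : IsSubexponential w

section Solidarity

variable {w : ℕ → ℝ≥0∞}

theorem IsSubexponential.ne_top (hw : IsSubexponential w) (n : ℕ) : w n ≠ ⊤ := by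
  obtain ⟨C, hC⟩ := hw 2 one_lt_two
  exact ne_top_of_le_ne_top
    (ENNReal.mul_ne_top ENNReal.coe_ne_top (ENNReal.pow_ne_top ENNReal.coe_ne_top)) (hC n)

theorem IsRecurrent.hitProb_eq_one (hR : IsRecurrent P) (hP : IsStochastic P)
    (hI : IsIrreducible P) (t x : E) : hitProb P t t x = 1 :=
  hitProb_self_eq_one hP hI (isRecurrent_iff_hitProb.1 hR t) x

theorem hitMoment_avoid_le (hP : IsStochastic P) (hI : IsIrreducible P) (hR : IsRecurrent P)
    (hw : Monotone w) (hij : i ≠ j) (x : E) : hitMoment w P j i x ≤ hitMoment w P i i x := by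
  simpa only [hR.hitProb_eq_one hP hI, mul_one] using hitMoment_mul_hitProb_le P hij.symm hw x

theorem hitMoment_triangle (hP : IsStochastic P) (hI : IsIrreducible P) (hR : IsRecurrent P)
    (hw : Monotone w) (hw_add : ∀ m n, w (m + n) ≤ w m * w n) (hij : i ≠ j) (x : E) :
    hitMoment w P j j x ≤ hitMoment w P i i x + hitMoment w P i i x * hitMoment w P j j i :=
  (hitMoment_self_le_add_mul P hij hw_add x).trans <|
    add_le_add (hitMoment_avoid_le hP hI hR hw hij x)
      (mul_le_mul_left (hitMoment_le_hitMoment_self w P i j x) _)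

theorem hitMoment_self_lt_top_of_return (hI : IsIrreducible P) (hw : Monotone w)
    (hi : hitMoment w P i i i < ⊤) (x : E) : hitMoment w P i i x < ⊤ := by
  obtain rfl | hix := eq_or_ne i x
  · exact hi
  · exact ENNReal.lt_top_of_mul_ne_top_right
      ((hitProb_mul_hitMoment_le P hix.symm hw i).trans_lt hi).ne
      (hitProb_avoid_start_ne_zero hI hix)

/-- Excursions from `i` avoiding `j` have probability `< 1`, but possibly `w`-moment `≥ 1`.
Tempering `w` by `b ^ n` with `b` close to `1` brings their moment below `1`, at the cost of a
factor `C`. -/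
theorem IsModerate.hitMoment_lt_top_of_ne (hw : IsModerate w) (hP : IsStochastic P)
    (hI : IsIrreducible P) (hR : IsRecurrent P) (hi : hitMoment w P i i i < ⊤) (hij : i ≠ j) :
    hitMoment w P j j i < ⊤ := by
  have hexc : ∑' n, hitAvoid P i j n i < 1 := by
    simpa only [hitMoment, Pi.one_apply, one_mul] using
      hitProb_return_avoid_lt_one hP hI (isRecurrent_iff_hitProb.1 hR i) hij
  obtain ⟨b, hb, hlt⟩ := exists_one_lt_tsum_min_pow_mul_lt_one hexc
    ((hitMoment_le_hitMoment_self w P i j i).trans_lt hi).ne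
  obtain ⟨C, hC⟩ := hw.subexponential b hb
  set v := infConv (fun n => (b : ℝ≥0∞) ^ n) w
  have hv_le (n : ℕ) : v n ≤ min ((b : ℝ≥0∞) ^ n) (w n) :=
    le_min (infConv_le_left hw.map_zero n) (infConv_le_right (pow_zero _) n)
  have hv_add : ∀ m n, v (m + n) ≤ v m * v n :=
    infConv_submultiplicative (fun m n => (pow_add _ m n).le) hw.map_add_le
  have hw_le : ∀ n, w n ≤ C * v n := le_mul_infConv fun m n => by
    rw [← mul_assoc]
    exact (hw.map_add_le m n).trans (mul_le_mul_left (hC m) _)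
  have hv_top (n : ℕ) : v n ≠ ⊤ :=
    ne_top_of_le_ne_top (hw.subexponential.ne_top n) ((hv_le n).trans (min_le_right _ _))
  have hv_lt : hitMoment v P i j i < 1 := (hitMoment_mono P hv_le i j i).trans_lt hlt
  have hv_direct : hitMoment v P j i i < ⊤ :=
    (hitMoment_mono P (fun n => (hv_le n).trans (min_le_right _ _)) j i i).trans_lt
      ((hitMoment_avoid_le hP hI hR hw.monotone hij i).trans_lt hi)
  calc hitMoment w P j j i
      ≤ C * hitMoment v P j j i :=
        (hitMoment_mono P hw_le j j i).trans_eq (hitMoment_const_mul C v P j j i)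
    _ ≤ C * (hitMoment v P j i i / (1 - hitMoment v P i j i)) :=
        mul_le_mul_right (hitMoment_self_le_div hP hij hv_top hv_add hv_lt) _
    _ < ⊤ := ENNReal.mul_lt_top ENNReal.coe_lt_top
        (ENNReal.div_lt_top hv_direct.ne (tsub_pos_of_lt hv_lt).ne')

theorem IsModerate.hitMoment_lt_top_of_return (hw : IsModerate w) (hP : IsStochastic P)
    (hI : IsIrreducible P) (hR : IsRecurrent P) (hi : hitMoment w P i i i < ⊤) (j x : E) :
    hitMoment w P j j x < ⊤ := by
  have hto := hitMoment_self_lt_top_of_return hI hw.monotone hi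
  obtain rfl | hij := eq_or_ne i j
  · exact hto x
  · exact (hitMoment_triangle hP hI hR hw.monotone hw.map_add_le hij x).trans_lt <|
      ENNReal.add_lt_top.2 ⟨hto x,
        ENNReal.mul_lt_top (hto x) (hw.hitMoment_lt_top_of_ne hP hI hR hi hij)⟩

theorem IsModerate.hitMoment_lt_top_of_commute (hw : IsModerate w) (hP : IsStochastic P)
    (hI : IsIrreducible P) (hR : IsRecurrent P) (hij : hitMoment w P j j i < ⊤)
    (hji : hitMoment w P i i j < ⊤) (t x : E) : hitMoment w P t t x < ⊤ := by
  refine hw.hitMoment_lt_top_of_return hP hI hR (i := i) ?_ t x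
  obtain rfl | hne := eq_or_ne i j
  · exact hji
  · exact (hitMoment_triangle hP hI hR hw.monotone hw.map_add_le hne.symm i).trans_lt <|
      ENNReal.add_lt_top.2 ⟨hij, ENNReal.mul_lt_top hij hji⟩

end Solidarity

theorem isModerate_update_const_mul {w : ℕ → ℝ≥0∞} {c : ℝ≥0} (hw : Monotone w)
    (h1 : 1 ≤ c * w 1) (hadd : ∀ m n, 0 < m → 0 < n → w (m + n) ≤ c * w m * w n)
    (hsub : IsSubexponential w) :
    IsModerate (Function.update (fun n => c * w n) 0 1) where
  monotone := monotone_nat_of_le_succ fun n => by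
    cases n with
    | zero => simpa using h1
    | succ n => simpa using mul_le_mul_right (hw (Nat.le_succ (n + 1))) _
  map_zero := Function.update_self ..
  map_add_le m n := by
    rcases Nat.eq_zero_or_pos m with rfl | hm
    · simp
    rcases Nat.eq_zero_or_pos n with rfl | hn
    · simp
    rw [Function.update_of_ne (by lia), Function.update_of_ne hm.ne', Function.update_of_ne hn.ne']
    exact (mul_le_mul_right (hadd m n hm hn) _).trans_eq (by ring)
  subexponential b hb := by
    obtain ⟨C, hC⟩ := hsub b hb
    refine ⟨1 + c * C, fun n => ?_⟩
    push_cast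
    cases n with
    | zero => simp
    | succ n =>
      rw [Function.update_of_ne n.succ_ne_zero]
      calc c * w (n + 1) ≤ c * (C * (b : ℝ≥0∞) ^ (n + 1)) := mul_le_mul_right (hC _) _
        _ ≤ (1 + c * C) * (b : ℝ≥0∞) ^ (n + 1) := by
          rw [← mul_assoc]
          gcongr
          exact le_add_self

theorem memH_of_submultiplicative_of_isSubexponential {f : ℕ → ℝ} {K : ℝ} (hpos : ∀ n, 0 < f n)
    (hmono : Monotone f) (hadd : ∀ x y : ℕ, 0 < x → 0 < y → f (x + y) ≤ K * f x * f y)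
    (hsub : IsSubexponential fun n => ENNReal.ofReal (f n)) : MemH f := by
  intro S _ P hP hI hR i j hij hji k l
  obtain ⟨c, hc, hKc, h1c⟩ : ∃ c : ℝ≥0, 0 < c ∧ K ≤ c ∧ 1 ≤ c * f 1 := by
    refine ⟨Real.toNNReal (max K (f 1)⁻¹), ?_, (le_max_left _ _).trans (Real.le_coe_toNNReal _), ?_⟩
    · exact Real.toNNReal_pos.2 (lt_max_of_lt_right (inv_pos.2 (hpos 1)))
    · rw [← inv_le_iff_one_le_mul₀ (hpos 1)]
      exact (le_max_right _ _).trans (Real.le_coe_toNNReal _)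
  have hmul (m : ℕ) : c * ENNReal.ofReal (f m) = ENNReal.ofReal (c * f m) := by
    rw [ENNReal.ofReal_mul c.coe_nonneg, ENNReal.ofReal_coe_nnreal]
  have hmod : IsModerate (Function.update (fun n => c * ENNReal.ofReal (f n)) 0 1) := by
    refine isModerate_update_const_mul (fun m n hmn => ENNReal.ofReal_le_ofReal (hmono hmn))
      (by rwa [hmul, ENNReal.one_le_ofReal]) (fun m n hm hn => ?_) hsub
    rw [hmul, ← ENNReal.ofReal_mul (mul_nonneg c.coe_nonneg (hpos m).le)]
    exact ENNReal.ofReal_le_ofReal ((hadd m n hm hn).trans (by gcongr <;> exact (hpos _).le))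
  have hmom (x y : S) : hitMoment (Function.update (fun n => c * ENNReal.ofReal (f n)) 0 1) P y y x
      = c * momGen f P x y := by
    rw [momGen_eq_hitMoment, ← hitMoment_const_mul]
    exact hitMoment_congr P (fun n => Function.update_of_ne n.succ_ne_zero ..) y y x
  have hlt := hmod.hitMoment_lt_top_of_commute hP hI hR
    ((hmom i j).trans_lt (ENNReal.mul_lt_top ENNReal.coe_lt_top hij))
    ((hmom j i).trans_lt (ENNReal.mul_lt_top ENNReal.coe_lt_top hji)) l k
  rw [hmom] at hlt
  exact ENNReal.lt_top_of_mul_ne_top_right hlt.ne (ENNReal.coe_ne_zero.2 hc.ne')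

open ExpGrowth in
theorem isSubexponential_iff_expGrowthSup_nonpos {w : ℕ → ℝ≥0∞} (hw : ∀ n, w n ≠ ⊤) :
    IsSubexponential w ↔ expGrowthSup w ≤ 0 := by
  constructor
  · intro h
    by_contra! hpos
    obtain ⟨b, hb, hb_lt⟩ : ∃ b : ℝ≥0, 1 < b ∧ (b : ℝ≥0∞) < (expGrowthSup w).exp := by
      obtain ⟨b, hb, hb_lt⟩ := ENNReal.lt_iff_exists_nnreal_btwn.1 (EReal.one_lt_exp_iff.2 hpos)
      exact ⟨b, by exact_mod_cast hb, hb_lt⟩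
    obtain ⟨C, hC⟩ := h b hb
    have hle : expGrowthSup w ≤ ENNReal.log b :=
      (expGrowthSup_le_of_eventually_le ENNReal.coe_ne_top (.of_forall hC)).trans_eq
        expGrowthSup_pow
    rw [← ENNReal.log_lt_log_iff, EReal.log_exp] at hb_lt
    exact hb_lt.not_ge hle
  · intro h b hb
    have hlog : (0 : EReal) < ENNReal.log b := ENNReal.zero_lt_log_iff.2 (by exact_mod_cast hb)
    obtain ⟨N, hN⟩ := eventually_atTop.1 (eventually_le_exp (h.trans_lt hlog))
    refine ⟨1 + ∑ m ∈ Finset.range N, (w m).toNNReal, fun n => ?_⟩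
    push_cast
    simp only [ENNReal.coe_toNNReal (hw _)]
    have hpow : 1 ≤ (b : ℝ≥0∞) ^ n := one_le_pow₀ (by exact_mod_cast hb.le)
    rcases lt_or_ge n N with hn | hn
    · calc w n ≤ ∑ m ∈ Finset.range N, w m :=
            Finset.single_le_sum_of_canonicallyOrdered (Finset.mem_range.2 hn)
        _ ≤ (1 + ∑ m ∈ Finset.range N, w m) * (b : ℝ≥0∞) ^ n :=
            le_add_self.trans (le_mul_of_one_le_right' hpow)
    · calc w n ≤ (b : ℝ≥0∞) ^ n :=
            (hN n hn).trans_eq (by rw [mul_comm, EReal.exp_nmul, ENNReal.exp_log])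
        _ ≤ (1 + ∑ m ∈ Finset.range N, w m) * (b : ℝ≥0∞) ^ n :=
            le_mul_of_one_le_left' le_self_add

open ExpGrowth in
theorem limsup_log_div_eq_zero_iff {f : ℕ → ℝ} (hpos : ∀ n, 0 < f n) (hmono : Monotone f) :
    limsup (fun n : ℕ => ((Real.log (f n) / n : ℝ) : EReal)) atTop = 0 ↔
      IsSubexponential fun n => ENNReal.ofReal (f n) := by
  have hlimsup : limsup (fun n : ℕ => ((Real.log (f n) / n : ℝ) : EReal)) atTop =
      expGrowthSup fun n => ENNReal.ofReal (f n) :=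
    congrArg (limsup · atTop) <| funext fun n => by
      rw [ENNReal.log_ofReal_of_pos (hpos n), EReal.coe_div]
      rfl
  have hnonneg : 0 ≤ expGrowthSup fun n => ENNReal.ofReal (f n) :=
    Monotone.expGrowthSup_nonneg (fun m n hmn => ENNReal.ofReal_le_ofReal (hmono hmn))
      fun h => (ENNReal.ofReal_pos.2 (hpos 0)).ne' (congrFun h 0)
  rw [isSubexponential_iff_expGrowthSup_nonpos fun n => ENNReal.ofReal_ne_top, hlimsup]
  exact ⟨le_of_eq, fun h => le_antisymm h hnonneg⟩

/-! ### The loop chain -/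

/-- The loop chain on `Option ℕ`. From the hub `some 0` it makes excursions of length `n + 2` with
probability `s n`: with probability `q` it jumps to `some (n + 1)`, otherwise it passes through
`none` and then jumps to `some n`; from `some (m + 1)` it descends to `some m`. -/
noncomputable def loopChain (q : ℝ≥0∞) (s : ℕ → ℝ≥0∞) : Option ℕ → Option ℕ → ℝ≥0∞
  | none, none => 0
  | none, some n => s n
  | some 0, none => 1 - q
  | some 0, some 0 => 0
  | some 0, some (n + 1) => q * s n
  | some (m + 1), x => if x = some m then 1 else 0

theorem hitMoment_self_eq_tsum [DecidableEq E] (w : ℕ → ℝ≥0∞) (P : E → E → ℝ≥0∞) (t x : E) :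
    hitMoment w P t t x =
      ∑' k, P x k * if k = t then w 1 else hitMoment (fun n => w (n + 1)) P t t k := by
  rw [tsum_eq_add_killedStep P t, hitMoment_eq_add_killedStep, if_pos rfl, mul_comm (w 1)]
  congr 1
  exact tsum_congr fun k => by by_cases hk : k = t <;> simp [hk]

theorem firstHit_pos_of_step {k : E} (h : 0 < P x k) (hk : ∃ n, 0 < firstHit P k t n) :
    ∃ n, 0 < firstHit P x t n := by
  obtain rfl | hkt := eq_or_ne k t
  · exact ⟨1, by rwa [firstHit, hitAvoid_one]⟩
  · obtain ⟨n, hn⟩ := hk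
    exact ⟨n + 1, (ENNReal.mul_pos h.ne' hn.ne').trans_le (mul_hitAvoid_le_hitAvoid_succ P hkt n x)⟩

theorem tsum_option (F : Option ℕ → ℝ≥0∞) : ∑' x, F x = F none + ∑' n, F (some n) := by
  rw [← (Equiv.optionEquivSumPUnit.{0} ℕ).symm.tsum_eq F,
    ENNReal.summable.tsum_sum ENNReal.summable]
  simp [add_comm]

section LoopChain

variable {q : ℝ≥0∞} {s : ℕ → ℝ≥0∞}

theorem isStochastic_loopChain (hq : q ≤ 1) (hs : ∑' n, s n = 1) :
    IsStochastic (loopChain q s)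
  | none => by rw [tsum_option]; simp [loopChain, hs]
  | some 0 => by
    rw [tsum_option, tsum_eq_zero_add' ENNReal.summable]
    simp [loopChain, ENNReal.tsum_mul_left, hs, tsub_add_cancel_of_le hq]
  | some (m + 1) => tsum_ite_eq (some m) _

theorem isIrreducible_loopChain (hq : q < 1) (hs : ∀ n, 0 < s n) :
    IsIrreducible (loopChain q s) := by
  have hub_none : 0 < loopChain q s (some 0) none := tsub_pos_of_lt hq
  have from_none : ∀ t, ∃ n, 0 < firstHit (loopChain q s) none t n
    | none => firstHit_pos_of_step (k := some 0) (hs 0) ⟨1, by rwa [firstHit, hitAvoid_one]⟩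
    | some m => ⟨1, by rw [firstHit, hitAvoid_one]; exact hs m⟩
  rintro (_ | m) t
  · exact from_none t
  · induction m with
    | zero => exact firstHit_pos_of_step hub_none (from_none t)
    | succ m ih => exact firstHit_pos_of_step (by simp [loopChain]) ih

theorem hitMoment_loopChain_hub_of_succ (q : ℝ≥0∞) (s w : ℕ → ℝ≥0∞) (m : ℕ) :
    hitMoment w (loopChain q s) (some 0) (some 0) (some (m + 1)) = w (m + 1) := by
  induction m generalizing w with
  | zero =>
    rw [hitMoment_self_eq_tsum]
    simp only [loopChain, ite_mul, one_mul, zero_mul, tsum_ite_eq, if_true]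
  | succ m ih =>
    rw [hitMoment_self_eq_tsum]
    simp only [loopChain, ite_mul, one_mul, zero_mul, tsum_ite_eq]
    simp [ih]

theorem hitMoment_loopChain_hub_of_none (q : ℝ≥0∞) (s w : ℕ → ℝ≥0∞) :
    hitMoment w (loopChain q s) (some 0) (some 0) none = ∑' n, s n * w (n + 1) := by
  rw [hitMoment_self_eq_tsum, tsum_option]
  simp only [loopChain, zero_mul, zero_add]
  exact tsum_congr fun n => by cases n <;> simp [hitMoment_loopChain_hub_of_succ]

theorem hitMoment_loopChain_hub (hq : q ≤ 1) (s w : ℕ → ℝ≥0∞) :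
    hitMoment w (loopChain q s) (some 0) (some 0) (some 0) = ∑' n, s n * w (n + 2) := by
  rw [hitMoment_self_eq_tsum, tsum_option, tsum_eq_zero_add' ENNReal.summable]
  simp only [loopChain, reduceCtorEq, if_false, hitMoment_loopChain_hub_of_none, zero_mul, zero_add,
    Option.some.injEq, Nat.succ_ne_zero, hitMoment_loopChain_hub_of_succ, mul_assoc,
    ENNReal.tsum_mul_left]
  rw [← add_mul, tsub_add_cancel_of_le hq, one_mul]

theorem isRecurrent_loopChain (hq : q < 1) (hs : ∀ n, 0 < s n) (hs1 : ∑' n, s n = 1) :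
    IsRecurrent (loopChain q s) :=
  isRecurrent_of_hitProb_eq_one (isStochastic_loopChain hq.le hs1) (isIrreducible_loopChain hq hs)
    (i := some 0) (by simpa [hs1] using hitMoment_loopChain_hub hq.le s 1)

theorem hitAvoid_loopChain_hub_le (q : ℝ≥0∞) (s : ℕ → ℝ≥0∞) (n m : ℕ) :
    hitAvoid (loopChain q s) none none n (some 0) ≤
      hitAvoid (loopChain q s) none none (n + m) (some m) := by
  induction m with
  | zero => rfl
  | succ m ih =>
    have hstep := mul_hitAvoid_le_hitAvoid_succ (loopChain q s)
      (Option.some_ne_none m) (n + m) (some (m + 1))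
    simp only [loopChain, if_true, one_mul] at hstep
    exact ih.trans hstep

theorem mul_hitAvoid_loopChain_hub_le_hub (q : ℝ≥0∞) (s : ℕ → ℝ≥0∞) (n x : ℕ) :
    q * s x * hitAvoid (loopChain q s) none none n (some 0) ≤
      hitAvoid (loopChain q s) none none (n + (x + 2)) (some 0) :=
  (mul_le_mul_right (hitAvoid_loopChain_hub_le q s n (x + 1)) _).trans
    (mul_hitAvoid_le_hitAvoid_succ (loopChain q s) (Option.some_ne_none (x + 1)) _ (some 0))

theorem mul_hitAvoid_loopChain_hub_le_none (q : ℝ≥0∞) (s : ℕ → ℝ≥0∞) (n y : ℕ) :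
    s y * hitAvoid (loopChain q s) none none n (some 0) ≤
      hitAvoid (loopChain q s) none none (n + (y + 1)) none :=
  (mul_le_mul_right (hitAvoid_loopChain_hub_le q s n y) _).trans
    (mul_hitAvoid_le_hitAvoid_succ (loopChain q s) (Option.some_ne_none y) _ none)

theorem mul_le_hitAvoid_loopChain (q : ℝ≥0∞) (s : ℕ → ℝ≥0∞) (x y : ℕ) :
    s y * (q * s x * (1 - q)) ≤ hitAvoid (loopChain q s) none none (x + y + 4) none := by
  have hloop := mul_hitAvoid_loopChain_hub_le_hub q s 1 x
  rw [hitAvoid_one] at hloop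
  refine (mul_le_mul_right hloop _).trans
    ((mul_hitAvoid_loopChain_hub_le_none q s _ y).trans_eq ?_)
  congr 1
  ring

theorem pow_mul_le_hitAvoid_loopChain (q : ℝ≥0∞) (s : ℕ → ℝ≥0∞) (N : ℕ) :
    s 0 * ((q * s 0) ^ N * (1 - q)) ≤
      hitAvoid (loopChain q s) none none (2 * N + 2) none := by
  have hloops : (q * s 0) ^ N * (1 - q) ≤
      hitAvoid (loopChain q s) none none (2 * N + 1) (some 0) := by
    induction N with
    | zero => simp [hitAvoid_one, loopChain]
    | succ N ih =>
      rw [pow_succ', mul_assoc]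
      exact (mul_le_mul_right ih _).trans (mul_hitAvoid_loopChain_hub_le_hub q s _ 0)
  exact (mul_le_mul_right hloops _).trans (mul_hitAvoid_loopChain_hub_le_none q s _ 0)

theorem MemG.exists_mul_hitAvoid_loopChain_le {f : ℕ → ℝ} (hf : MemG f) (hq : q < 1)
    (hs : ∀ n, 0 < s n) (hs1 : ∑' n, s n = 1)
    (hfin : ∑' n, s n * ENNReal.ofReal (f (n + 2)) ≠ ⊤) :
    ∃ C : ℝ≥0, ∀ n, ENNReal.ofReal (f n) * hitAvoid (loopChain q s) none none n none ≤ C := by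
  have hlt := hf (Option ℕ) (loopChain q s) (isStochastic_loopChain hq.le hs1)
    (isIrreducible_loopChain hq hs) (isRecurrent_loopChain hq hs hs1) (some 0)
    (by rw [momGen_eq_hitMoment, hitMoment_loopChain_hub hq.le]; exact hfin.lt_top) none
  refine ⟨(momGen f (loopChain q s) none none).toNNReal, fun n => ?_⟩
  rw [ENNReal.coe_toNNReal hlt.ne]
  exact ENNReal.le_tsum n

end LoopChain

/-! ### Choice of the excursion law -/

theorem exists_law_mul_eq {F w : ℕ → ℝ≥0∞} (hF : Monotone F) (hF_zero : F 0 ≠ 0)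
    (hF_top : ∀ n, F n ≠ ⊤) (hw : ∀ n, w n ≠ 0) (hw_sum : ∑' n, w n ≠ ⊤) :
    ∃ s : ℕ → ℝ≥0∞, (∀ n, 0 < s n) ∧ ∑' n, s n = 1 ∧
      ∃ c : ℝ≥0, c ≠ 0 ∧ ∀ n, s n * F n = c * w n := by
  have hF_ne (n : ℕ) : F n ≠ 0 := (hF_zero.bot_lt.trans_le (hF n.zero_le)).ne'
  set Z := ∑' n, w n / F n
  have hZ_top : Z ≠ ⊤ := by
    refine ne_top_of_le_ne_top (ENNReal.div_ne_top hw_sum hF_zero) ?_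
    simp only [Z, div_eq_mul_inv, ← ENNReal.tsum_mul_right]
    exact ENNReal.tsum_le_tsum fun n => by gcongr; exact hF n.zero_le
  have hZ : Z ≠ 0 := fun h =>
    ENNReal.div_ne_zero.2 ⟨hw 0, hF_top 0⟩ (ENNReal.tsum_eq_zero.1 h 0)
  refine ⟨fun n => w n / F n / Z, fun n => ENNReal.div_pos
      (ENNReal.div_ne_zero.2 ⟨hw n, hF_top n⟩) hZ_top, ?_, Z⁻¹.toNNReal, ?_, fun n => ?_⟩
  · simp only [div_eq_mul_inv _ Z, ENNReal.tsum_mul_right]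
    exact ENNReal.mul_inv_cancel hZ hZ_top
  · exact (ENNReal.toNNReal_pos (ENNReal.inv_ne_zero.2 hZ_top) (ENNReal.inv_ne_top.2 hZ)).ne'
  · simp only [ENNReal.coe_toNNReal (ENNReal.inv_ne_top.2 hZ), div_eq_mul_inv _ Z]
    rw [mul_right_comm, ENNReal.div_mul_cancel (hF_ne n) (hF_top n), mul_comm]

theorem exists_law_le_apply_zero {F : ℕ → ℝ≥0∞} {q : ℝ≥0∞} (hF : Monotone F) (hF_zero : F 0 ≠ 0)
    (hF_top : ∀ n, F n ≠ ⊤) (hq : q < 1) :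
    ∃ s : ℕ → ℝ≥0∞, (∀ n, 0 < s n) ∧ ∑' n, s n = 1 ∧ q ≤ s 0 ∧ ∑' n, s n * F n ≠ ⊤ := by
  have hgeom : ∑' n, (2⁻¹ : ℝ≥0∞) ^ n ≠ ⊤ := by
    rw [ENNReal.tsum_geometric_two]
    exact ENNReal.ofNat_ne_top
  obtain ⟨s, hs, hs1, c, -, hsF⟩ :=
    exists_law_mul_eq hF hF_zero hF_top (fun n => by simp) hgeom
  refine ⟨fun n => (if n = 0 then q else 0) + (1 - q) * s n, fun n =>
    (ENNReal.mul_pos (tsub_pos_of_lt hq).ne' (hs n).ne').trans_le le_add_self, ?_, ?_, ?_⟩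
  · rw [ENNReal.tsum_add, ENNReal.tsum_mul_left, hs1, tsum_ite_eq, mul_one,
      add_tsub_cancel_of_le hq.le]
  · exact (if_pos rfl).ge.trans le_self_add
  · simp only [add_mul, ite_mul, zero_mul, mul_assoc, hsF]
    rw [ENNReal.tsum_add, tsum_ite_eq, ENNReal.tsum_mul_left, ENNReal.tsum_mul_left]
    exact ENNReal.add_ne_top.2 ⟨ENNReal.mul_ne_top hq.ne_top (hF_top 0),
      ENNReal.mul_ne_top (ENNReal.sub_ne_top ENNReal.one_ne_top)
        (ENNReal.mul_ne_top ENNReal.coe_ne_top hgeom)⟩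

/-- The image under `u` of the geometric weights `2⁻¹ ^ k`. -/
noncomputable def dyadicMass (u : ℕ → ℕ) (n : ℕ) : ℝ≥0∞ :=
  ∑' k, if n = u k then 2⁻¹ ^ k else 0

theorem tsum_dyadicMass (u : ℕ → ℕ) : ∑' n, dyadicMass u n = 2 := by
  simp only [dyadicMass]
  rw [ENNReal.tsum_comm]
  simp only [tsum_ite_eq, ENNReal.tsum_geometric_two]

theorem pow_le_dyadicMass (u : ℕ → ℕ) (k : ℕ) : 2⁻¹ ^ k ≤ dyadicMass u (u k) :=
  (if_pos rfl).ge.trans (ENNReal.le_tsum (f := fun l => if u k = u l then 2⁻¹ ^ l else 0) k)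

theorem exists_tsum_ne_top_pow_le (x y : ℕ → ℕ) :
    ∃ w : ℕ → ℝ≥0∞, (∀ n, w n ≠ 0) ∧ ∑' n, w n ≠ ⊤ ∧
      (∀ k, 2⁻¹ ^ k ≤ w (x k)) ∧ ∀ k, 2⁻¹ ^ k ≤ w (y k) := by
  refine ⟨dyadicMass id + dyadicMass x + dyadicMass y, fun n => ?_, ?_, fun k => ?_, fun k => ?_⟩
  · have hpos : (0 : ℝ≥0∞) < 2⁻¹ ^ n := ENNReal.pow_pos (by simp) n
    exact (hpos.trans_le ((pow_le_dyadicMass id n).trans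
      (le_self_add.trans le_self_add))).ne'
  · simp only [Pi.add_apply, ENNReal.tsum_add, tsum_dyadicMass]
    finiteness
  · exact (pow_le_dyadicMass x k).trans (le_add_self.trans le_self_add)
  · exact (pow_le_dyadicMass y k).trans le_add_self

theorem exists_law_le_four_pow_mul {F : ℕ → ℝ≥0∞} (hF : Monotone F) (hF_zero : F 0 ≠ 0)
    (hF_top : ∀ n, F n ≠ ⊤) (x y : ℕ → ℕ) :
    ∃ s : ℕ → ℝ≥0∞, (∀ n, 0 < s n) ∧ ∑' n, s n = 1 ∧ ∑' n, s n * F n ≠ ⊤ ∧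
      ∃ c ≠ 0, ∀ k, c ≤ 4 ^ k * (s (x k) * F (x k) * (s (y k) * F (y k))) := by
  obtain ⟨w, hw, hw_sum, hwx, hwy⟩ := exists_tsum_ne_top_pow_le x y
  obtain ⟨s, hs, hs1, c, hc, hsF⟩ := exists_law_mul_eq hF hF_zero hF_top hw hw_sum
  refine ⟨s, hs, hs1, ?_, c * c, by simpa using hc, fun k => ?_⟩
  · simp only [hsF, ENNReal.tsum_mul_left]
    exact ENNReal.mul_ne_top ENNReal.coe_ne_top hw_sum
  have hpow : (4 : ℝ≥0∞) ^ k * (2⁻¹ ^ k * 2⁻¹ ^ k) = 1 := by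
    rw [show (4 : ℝ≥0∞) = 2 * 2 by norm_num, ← mul_pow, ← mul_pow, mul_mul_mul_comm,
      ENNReal.mul_inv_cancel two_ne_zero ENNReal.ofNat_ne_top, one_mul, one_pow]
  calc (c * c : ℝ≥0∞) = 4 ^ k * (c * 2⁻¹ ^ k * (c * 2⁻¹ ^ k)) := by
        rw [mul_mul_mul_comm (c : ℝ≥0∞), mul_left_comm, hpow, mul_one]
    _ ≤ 4 ^ k * (c * w (x k) * (c * w (y k))) := by
        gcongr
        · exact hwx k
        · exact hwy k
    _ = _ := by rw [hsF, hsF]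

/-! ### Necessity of the growth conditions -/

section Necessity

variable {f : ℕ → ℝ}

theorem MemG.isSubexponential (hf : MemG f) (hpos : ∀ n, 0 < f n) (hmono : Monotone f) :
    IsSubexponential fun n => ENNReal.ofReal (f n) := by
  intro b hb
  have hb_one : (1 : ℝ≥0∞) < b := by exact_mod_cast hb
  set q : ℝ≥0∞ := (b : ℝ≥0∞)⁻¹ with hq_def
  have hq : q < 1 := ENNReal.inv_lt_one.2 hb_one
  have hq_pos : q ≠ 0 := ENNReal.inv_ne_zero.2 ENNReal.coe_ne_top
  have hF : Monotone fun n => ENNReal.ofReal (f n) := fun m n hmn =>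
    ENNReal.ofReal_le_ofReal (hmono hmn)
  obtain ⟨s, hs, hs1, hqs, hfin⟩ := exists_law_le_apply_zero
    (F := fun n => ENNReal.ofReal (f (n + 2)))
    (fun m n hmn => hF (Nat.add_le_add_right hmn 2)) (ENNReal.ofReal_pos.2 (hpos 2)).ne'
    (fun n => ENNReal.ofReal_ne_top) hq
  obtain ⟨C, hC⟩ := hf.exists_mul_hitAvoid_loopChain_le hq hs hs1 hfin
  set D := q * (1 - q)
  have hD : D ≠ 0 := mul_ne_zero hq_pos (tsub_pos_of_lt hq).ne'
  refine ⟨(C / D).toNNReal, fun n => ?_⟩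
  rw [ENNReal.coe_toNNReal (ENNReal.div_ne_top ENNReal.coe_ne_top hD)]
  have hpow : q ^ n ≤ (q * s 0) ^ (n / 2) := calc
    q ^ n ≤ q ^ (2 * (n / 2)) := pow_le_pow_right_of_le_one' hq.le (Nat.mul_div_le n 2)
    _ = (q * q) ^ (n / 2) := by rw [pow_mul, sq]
    _ ≤ (q * s 0) ^ (n / 2) := by gcongr
  have hloops : ENNReal.ofReal (f n) * (q ^ n * D) ≤ C := calc
    _ ≤ ENNReal.ofReal (f (2 * (n / 2) + 2)) * ((q * s 0) ^ (n / 2) * (s 0 * (1 - q))) :=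
        mul_le_mul' (hF (by lia)) (mul_le_mul' hpow (mul_le_mul_left hqs _))
    _ = ENNReal.ofReal (f (2 * (n / 2) + 2)) * (s 0 * ((q * s 0) ^ (n / 2) * (1 - q))) := by ring
    _ ≤ C := (mul_le_mul_right (pow_mul_le_hitAvoid_loopChain q s (n / 2)) _).trans (hC _)
  calc ENNReal.ofReal (f n) ≤ C / (q ^ n * D) :=
        (ENNReal.le_div_iff_mul_le (.inl (mul_ne_zero (pow_ne_zero n hq_pos) hD))
          (.inr ENNReal.coe_ne_top)).2 hloops
    _ = C / D * (b : ℝ≥0∞) ^ n := by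
        rw [div_eq_mul_inv, ENNReal.mul_inv (.inl (pow_ne_zero n hq_pos)) (.inr hD), hq_def,
          ← ENNReal.inv_pow, inv_inv, div_eq_mul_inv]
        ring

theorem exists_submultiplicative_of_shift {K : ℝ} (hpos : ∀ n, 0 < f n) (hmono : Monotone f)
    (hK : 0 < K) (hf : ∀ x y, f (x + y + 4) ≤ K * f (x + 2) * f (y + 2)) :
    ∃ K : ℝ, 0 < K ∧ ∀ x y : ℕ, 0 < x → 0 < y → f (x + y) ≤ K * f x * f y := by
  set r := f 2 / f 1
  have hr : 0 < r := div_pos (hpos 2) (hpos 1)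
  have hshift (x : ℕ) (hx : 0 < x) : f (x - 2 + 2) ≤ r * f x := by
    have hr_one : 1 ≤ r := (one_le_div (hpos 1)).2 (hmono one_le_two)
    obtain rfl | hx_two : x = 1 ∨ 2 ≤ x := by lia
    · exact (div_mul_cancel₀ _ (hpos 1).ne').ge
    · rw [Nat.sub_add_cancel hx_two]
      exact le_mul_of_one_le_left (hpos x).le hr_one
  refine ⟨K * r ^ 2, by positivity, fun x y hx hy => ?_⟩
  calc f (x + y) ≤ f (x - 2 + (y - 2) + 4) := hmono (by lia)
    _ ≤ K * f (x - 2 + 2) * f (y - 2 + 2) := hf _ _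
    _ ≤ K * (r * f x) * (r * f y) := by
        gcongr
        · exact (hpos _).le
        · exact mul_nonneg hK.le (mul_pos hr (hpos x)).le
        · exact hshift x hx
        · exact hshift y hy
    _ = K * r ^ 2 * f x * f y := by ring

theorem MemG.exists_mul_law_mul_law_le (hf : MemG f) {s : ℕ → ℝ≥0∞} (hs : ∀ n, 0 < s n)
    (hs1 : ∑' n, s n = 1) (hfin : ∑' n, s n * ENNReal.ofReal (f (n + 2)) ≠ ⊤) :
    ∃ C ≠ ⊤, ∀ x y, ENNReal.ofReal (f (x + y + 4)) * (s x * s y) ≤ C := by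
  obtain ⟨C, hC⟩ :=
    hf.exists_mul_hitAvoid_loopChain_le (q := 2⁻¹) (by simp) hs hs1 hfin
  have hquarter : (2⁻¹ * 2⁻¹ : ℝ≥0∞) ≠ 0 := by simp
  refine ⟨C / (2⁻¹ * 2⁻¹), ENNReal.div_ne_top ENNReal.coe_ne_top hquarter, fun x y => ?_⟩
  rw [ENNReal.le_div_iff_mul_le (.inl hquarter) (.inr ENNReal.coe_ne_top)]
  calc ENNReal.ofReal (f (x + y + 4)) * (s x * s y) * (2⁻¹ * 2⁻¹)
      = ENNReal.ofReal (f (x + y + 4)) * (s y * (2⁻¹ * s x * (1 - 2⁻¹))) := by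
        rw [ENNReal.one_sub_inv_two]
        ring
    _ ≤ C := (mul_le_mul_right (mul_le_hitAvoid_loopChain 2⁻¹ s x y) _).trans (hC _)

theorem MemG.exists_submultiplicative (hf : MemG f) (hpos : ∀ n, 0 < f n) (hmono : Monotone f) :
    ∃ K : ℝ, 0 < K ∧ ∀ x y : ℕ, 0 < x → 0 < y → f (x + y) ≤ K * f x * f y := by
  by_contra hnot
  -- The law below gives `x k` and `y k` masses of order `2⁻¹ ^ k`, for which `4 ^ k` compensates.
  have hviolated (k : ℕ) : ∃ x y,
      ((k + 1) * 4 ^ k : ℕ) * f (x + 2) * f (y + 2) ≤ f (x + y + 4) := by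
    by_contra! hle
    exact hnot (exists_submultiplicative_of_shift hpos hmono (by positivity)
      fun x y => (hle x y).le)
  choose x y hxy using hviolated
  set F : ℕ → ℝ≥0∞ := fun n => ENNReal.ofReal (f (n + 2))
  obtain ⟨s, hs, hs1, hfin, c, hc, hcs⟩ := exists_law_le_four_pow_mul (F := F)
    (fun m n hmn => ENNReal.ofReal_le_ofReal (hmono (Nat.add_le_add_right hmn 2)))
    (ENNReal.ofReal_pos.2 (hpos 2)).ne' (fun n => ENNReal.ofReal_ne_top) x y
  obtain ⟨C, hC_top, hC⟩ := hf.exists_mul_law_mul_law_le hs hs1 hfin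
  have hF_add (k : ℕ) :
      ((k + 1) * 4 ^ k : ℕ) * F (x k) * F (y k) ≤ ENNReal.ofReal (f (x k + y k + 4)) := by
    rw [← ENNReal.ofReal_natCast, ← ENNReal.ofReal_mul (Nat.cast_nonneg _),
      ← ENNReal.ofReal_mul (mul_nonneg (Nat.cast_nonneg _) (hpos _).le)]
    exact ENNReal.ofReal_le_ofReal (hxy k)
  have hbound (k : ℕ) : (k + 1 : ℕ) * c ≤ C := calc
    (k + 1 : ℕ) * c
      ≤ (k + 1 : ℕ) * (4 ^ k * (s (x k) * F (x k) * (s (y k) * F (y k)))) := by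
        gcongr
        exact hcs k
    _ = ((k + 1) * 4 ^ k : ℕ) * F (x k) * F (y k) * (s (x k) * s (y k)) := by
        push_cast
        ring
    _ ≤ ENNReal.ofReal (f (x k + y k + 4)) * (s (x k) * s (y k)) := mul_le_mul_left (hF_add k) _
    _ ≤ C := hC _ _
  obtain ⟨k, hk⟩ := ENNReal.exists_nat_mul_gt hc hC_top
  exact (hbound k).not_gt (hk.trans_le (by gcongr; exact k.le_succ))

end Necessity

theorem stmt_0 (f : ℕ → ℝ) (hpos : ∀ n, 0 < f n) (hmono : Monotone f)
    (htop : Tendsto f atTop atTop) :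
    List.TFAE
      [MemH f,
       MemG f,
       (∃ K : ℝ, 0 < K ∧ ∀ x y : ℕ, 0 < x → 0 < y → f (x + y) ≤ K * f x * f y) ∧
         limsup (fun n : ℕ => ((Real.log (f n) / n : ℝ) : EReal)) atTop = 0] := by
  rw [limsup_log_div_eq_zero_iff hpos hmono]
  tfae_have 1 → 2 := fun hf S _ P hP hI hR i hi j => hf S P hP hI hR i i hi hi j j
  tfae_have 2 → 3 := fun hf =>
    ⟨hf.exists_submultiplicative hpos hmono, hf.isSubexponential hpos hmono⟩
  tfae_have 3 → 1 := fun ⟨⟨_, _, hadd⟩, hsub⟩ =>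
    memH_of_submultiplicative_of_isSubexponential hpos hmono hadd hsub
  tfae_finish

end MCPaper
end

section
/- Let f : ℕ → (0,∞) be non-decreasing with f(n) → ∞, and suppose f belongs to the class G. Then limsup_{n→∞} (1/n)·log f(n) = 0. -/
/-!
If `f` belongs to the class `𝒢`, then the power series `∑ f n * r ^ n` converges for all `r < 1`,
and the upper bound on the limsup is the easy half of the Cauchy–Hadamard formula. The convergence
is read off a single two-state chain: one state has a return time at most `2`, so all its moments
are finite, while the return time of the other exceeds `2` by a geometric random variable with
parameter `r`, so its `f`-moment is that power series up to a shift and a constant factor.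
-/

open Filter
open scoped ENNReal

namespace MCPaper

variable {E : Type*}

section FirstHit

variable (P : E → E → ℝ≥0∞) (i j : E)

lemma firstHit_zero : firstHit P i j 0 = 0 := rfl

lemma firstHit_one : firstHit P i j 1 = P i j := rfl

open Classical in
lemma firstHit_add_two (n : ℕ) :
    firstHit P i j (n + 2) = ∑' k, if k = j then 0 else P i k * firstHit P k j (n + 1) := by
  simp only [firstHit, hitAvoid, or_self]

end FirstHit

/-- The transition matrix, for `p ≤ 1`, of the chain on two states that stays at `true` with
probability `p`, moves from `true` to `false` with probability `1 - p`, and always jumps from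
`false` to `true`.
It makes the return time of `true` bounded and that of `false` geometric up to a shift. -/
noncomputable def twoState (p : ℝ≥0∞) : Bool → Bool → ℝ≥0∞
  | true, true => p
  | true, false => 1 - p
  | false, true => 1
  | false, false => 0

namespace twoState

variable (p : ℝ≥0∞)

lemma firstHit_true_false (n : ℕ) :
    firstHit (twoState p) true false (n + 1) = p ^ n * (1 - p) := by
  induction n with
  | zero => simp [firstHit_one, twoState]
  | succ n ih => simp [firstHit_add_two, ih, twoState, pow_succ', mul_assoc]

lemma firstHit_false_false (n : ℕ) :
    firstHit (twoState p) false false (n + 2) = p ^ n * (1 - p) := by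
  simp [firstHit_add_two, firstHit_true_false, twoState]

lemma firstHit_true_true_two : firstHit (twoState p) true true 2 = 1 - p := by
  simp [firstHit_add_two, firstHit_one, twoState]

lemma firstHit_true_true_add_three (n : ℕ) :
    firstHit (twoState p) true true (n + 3) = 0 := by
  simp [firstHit_add_two, twoState]

lemma tsum_mul_firstHit_true_true (g : ℕ → ℝ≥0∞) :
    ∑' n, g n * firstHit (twoState p) true true n = g 1 * p + g 2 * (1 - p) := by
  rw [← ENNReal.summable.sum_add_tsum_nat_add' (k := 3)]
  simp [Finset.sum_range_succ, firstHit_zero, firstHit_one, firstHit_true_true_two,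
    firstHit_true_true_add_three, twoState]

lemma tsum_mul_firstHit_false_false (g : ℕ → ℝ≥0∞) :
    ∑' n, g n * firstHit (twoState p) false false n = (∑' n, g (n + 2) * p ^ n) * (1 - p) := by
  rw [← ENNReal.summable.sum_add_tsum_nat_add' (k := 2), ← ENNReal.tsum_mul_right]
  simp [Finset.sum_range_succ, firstHit_zero, firstHit_one, firstHit_false_false, twoState,
    mul_assoc]

variable {p}

lemma isStochastic (hp : p ≤ 1) : IsStochastic (twoState p) := by
  rintro (_ | _)
  · simp [twoState]
  · simp [twoState, add_tsub_cancel_of_le hp]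

lemma isIrreducible (hp : p < 1) : IsIrreducible (twoState p) := by
  have hq : 0 < 1 - p := tsub_pos_of_lt hp
  rintro (_ | _) (_ | _)
  · exact ⟨2, by simpa [firstHit_false_false p 0] using hq⟩
  · exact ⟨1, by simp [firstHit_one, twoState]⟩
  · exact ⟨1, by simpa [firstHit_one, twoState] using hq⟩
  · exact ⟨2, by simpa [firstHit_true_true_two] using hq⟩

lemma isRecurrent (hp : p < 1) : IsRecurrent (twoState p) := by
  rintro (_ | _)
  · calc ∑' n, firstHit (twoState p) false false n
        = (∑' n, p ^ n) * (1 - p) := by simpa using tsum_mul_firstHit_false_false p 1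
      _ = (1 - p)⁻¹ * (1 - p) := by rw [ENNReal.tsum_geometric]
      _ = 1 := ENNReal.inv_mul_cancel (tsub_pos_of_lt hp).ne' (by finiteness)
  · calc ∑' n, firstHit (twoState p) true true n
        = p + (1 - p) := by simpa using tsum_mul_firstHit_true_true p 1
      _ = 1 := add_tsub_cancel_of_le hp.le

lemma momGen_true_true_lt_top (f : ℕ → ℝ) (hp : p ≠ ⊤) :
    momGen f (twoState p) true true < ⊤ := by
  rw [momGen, tsum_mul_firstHit_true_true]
  finiteness

end twoState

section GrowthRate

variable {f : ℕ → ℝ} {r : ℝ}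

lemma MemG.tsum_ofReal_mul_pow_ne_top (hG : MemG f) {p : ℝ≥0∞} (hp : p < 1) :
    ∑' n, ENNReal.ofReal (f (n + 2)) * p ^ n ≠ ⊤ := by
  have hfalse : momGen f (twoState p) false false < ⊤ :=
    hG Bool (twoState p) (twoState.isStochastic hp.le) (twoState.isIrreducible hp)
      (twoState.isRecurrent hp) true (twoState.momGen_true_true_lt_top f hp.ne_top) false
  rw [momGen, twoState.tsum_mul_firstHit_false_false] at hfalse
  exact (ENNReal.lt_top_of_mul_ne_top_left hfalse.ne (tsub_pos_of_lt hp).ne').ne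

lemma MemG.summable_mul_pow (hG : MemG f) (hf : ∀ n, 0 ≤ f n) (hr0 : 0 ≤ r) (hr1 : r < 1) :
    Summable fun n ↦ f n * r ^ n := by
  have hshift : Summable fun n ↦ f (n + 2) * r ^ n := by
    simpa [hf, hr0] using ENNReal.summable_toReal
      (hG.tsum_ofReal_mul_pow_ne_top (ENNReal.ofReal_lt_one.mpr hr1))
  rw [← summable_nat_add_iff 2]
  simpa only [pow_add, mul_assoc] using hshift.mul_right (r ^ 2)

lemma limsup_log_div_le_neg_log (hf : ∀ n, 0 < f n) (hr : 0 < r)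
    (hsum : Summable fun n ↦ f n * r ^ n) :
    limsup (fun n : ℕ ↦ ((Real.log (f n) / n : ℝ) : EReal)) atTop ≤ (-Real.log r : ℝ) := by
  refine limsup_le_of_le (by isBoundedDefault) ?_
  filter_upwards [hsum.tendsto_atTop_zero.eventually_le_const one_pos, eventually_gt_atTop 0]
    with n hle hn
  have hlog : Real.log (f n) + n * Real.log r ≤ 0 := by
    rw [← Real.log_pow, ← Real.log_mul (hf n).ne' (pow_pos hr n).ne']
    exact Real.log_nonpos (mul_pos (hf n) (pow_pos hr n)).le hle
  rw [EReal.coe_le_coe_iff, div_le_iff₀ (Nat.cast_pos.mpr hn)]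
  linarith

lemma limsup_log_div_nonneg (hf : ∃ᶠ n in atTop, 1 ≤ f n) :
    0 ≤ limsup (fun n : ℕ ↦ ((Real.log (f n) / n : ℝ) : EReal)) atTop := by
  refine le_limsup_of_frequently_le (hf.mono fun n hn ↦ ?_) (by isBoundedDefault)
  exact EReal.coe_nonneg.mpr (div_nonneg (Real.log_nonneg hn) n.cast_nonneg)

lemma MemG.limsup_log_div_nonpos (hG : MemG f) (hf : ∀ n, 0 < f n) :
    limsup (fun n : ℕ ↦ ((Real.log (f n) / n : ℝ) : EReal)) atTop ≤ 0 := by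
  refine EReal.le_of_forall_lt_iff_le.mp fun c hc ↦ ?_
  have hc : 0 < c := EReal.coe_pos.mp hc
  have hsum : Summable fun n ↦ f n * Real.exp (-c) ^ n :=
    hG.summable_mul_pow (fun n ↦ (hf n).le) (Real.exp_pos _).le
      (Real.exp_lt_one_iff.mpr (neg_neg_of_pos hc))
  simpa only [Real.log_exp, neg_neg] using limsup_log_div_le_neg_log hf (Real.exp_pos _) hsum

end GrowthRate

theorem stmt_5_general (f : ℕ → ℝ) (hpos : ∀ n, 0 < f n) (hone : ∃ᶠ n in atTop, 1 ≤ f n)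
    (hG : MemG f) :
    limsup (fun n : ℕ => ((Real.log (f n) / n : ℝ) : EReal)) atTop = 0 :=
  le_antisymm (hG.limsup_log_div_nonpos hpos) (limsup_log_div_nonneg hone)

theorem stmt_5 (f : ℕ → ℝ) (hpos : ∀ n, 0 < f n) (hmono : Monotone f)
    (htop : Tendsto f atTop atTop) (hG : MemG f) :
    limsup (fun n : ℕ => ((Real.log (f n) / n : ℝ) : EReal)) atTop = 0 :=
  stmt_5_general f hpos (htop.eventually_ge_atTop 1).frequently hG

end MCPaper
end
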